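/- For every subset S ⊆ {1,…,N} of size at least 2 and every v ∈ S: Δ₁(S,v) = 0 if and only if Δ₂(S,v) ≤ 0. Equivalently, removing v from S leaves rank(M_S U) unchanged if and only if ξ₂(S∖{v}) ≥ ξ₂(S). -/

import Mathlib

open Matrix

noncomputable section

open scoped Classical in
/-- The Moore–Penrose pseudoinverse of a real matrix, characterised by the four
Penrose conditions:  `A A† A = A`, `A† A A† = A†`, `(A A†)ᵀ = A A†`, `(A† A)ᵀ = A† A`. -/
noncomputable def pinv {m n : Type*} [Fintype m] [Fintype n] [DecidableEq m] [DecidableEq n]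
    (A : Matrix m n ℝ) : Matrix n m ℝ :=
  if h : ∃ B : Matrix n m ℝ,
      A * B * A = A ∧ B * A * B = B ∧ (A * B)ᵀ = A * B ∧ (B * A)ᵀ = B * A
  then h.choose else 0

/-- The sampling matrix `M_S` of a subset `S ⊆ {1,…,N}`: rows are indexed by the
elements of `S`, and the row corresponding to `j ∈ S` is the standard basis row vector `eⱼᵀ`. -/
def samp {N : ℕ} (S : Finset (Fin N)) : Matrix {x // x ∈ S} (Fin N) ℝ :=
  fun i j => if (i : Fin N) = j then 1 else 0

/-- Squared Frobenius norm of a matrix. -/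
def frobSq {m n : Type*} [Fintype m] [Fintype n] (A : Matrix m n ℝ) : ℝ :=
  ∑ i, ∑ j, (A i j) ^ 2

/-- The least-squares reconstruction matrix `R_S = U (M_S U)†`. -/
def lsRec {N k : ℕ} (U : Matrix (Fin N) (Fin k) ℝ) (S : Finset (Fin N)) :
    Matrix (Fin N) {x // x ∈ S} ℝ :=
  U * pinv (samp S * U)

/-- `ξ₁(S) = ‖U − R_S M_S U‖_F²`, the noiseless reconstruction error. -/
def xi1 {N k : ℕ} (U : Matrix (Fin N) (Fin k) ℝ) (S : Finset (Fin N)) : ℝ :=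
  frobSq (U - lsRec U S * (samp S * U))

/-- `ξ₂(S) = ‖R_S‖_F²`, the noise-sensitivity term. -/
def xi2 {N k : ℕ} (U : Matrix (Fin N) (Fin k) ℝ) (S : Finset (Fin N)) : ℝ :=
  frobSq (lsRec U S)

/-- The Penrose conditions: `B` is the Moore–Penrose pseudoinverse of `A`. -/
structure IsPinv {m n : Type*} [Fintype m] [Fintype n] (A : Matrix m n ℝ) (B : Matrix n m ℝ) :
    Prop where
  mul_mul_self : A * B * A = A
  self_mul_mul : B * A * B = B
  transpose_left : (A * B)ᵀ = A * B
  transpose_right : (B * A)ᵀ = B * A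

section General

variable {l m n p : Type*} [Fintype l] [Fintype m] [Fintype n]

theorem eq_zero_of_transpose_mul_self_mul (A : Matrix m n ℝ) (B : Matrix n p ℝ)
    (h : Aᵀ * A * B = 0) : A * B = 0 := by
  have := conjTranspose_mul_self_mul_eq_zero A B
  rw [conjTranspose_eq_transpose_of_trivial] at this
  exact this.1 h

theorem exists_isPinv_of_isHermitian [DecidableEq n] (H : Matrix n n ℝ) (hH : H.IsHermitian) :
    ∃ G : Matrix n n ℝ, IsPinv H G ∧ Gᵀ = G ∧ G * H = H * G := by
  obtain ⟨V, d, hV, hHV⟩ : ∃ (V : Matrix n n ℝ) (d : n → ℝ), Vᵀ * V = 1 ∧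
      H = V * diagonal d * Vᵀ := by
    refine ⟨hH.eigenvectorUnitary, hH.eigenvalues, ?_, ?_⟩
    · have := Unitary.coe_star_mul_self hH.eigenvectorUnitary
      rwa [star_eq_conjTranspose, conjTranspose_eq_transpose_of_trivial] at this
    · have := hH.spectral_theorem
      rw [Unitary.conjStarAlgAut_apply, star_eq_conjTranspose,
        conjTranspose_eq_transpose_of_trivial] at this
      exact this
  have key (a b : n → ℝ) : (V * diagonal a * Vᵀ) * (V * diagonal b * Vᵀ) =
      V * diagonal (fun i => a i * b i) * Vᵀ := by
    rw [← diagonal_mul_diagonal]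
    calc _ = V * diagonal a * (Vᵀ * V) * diagonal b * Vᵀ := by simp only [Matrix.mul_assoc]
      _ = _ := by rw [hV, Matrix.mul_one]; simp only [Matrix.mul_assoc]
  have symm (a : n → ℝ) : (V * diagonal a * Vᵀ)ᵀ = V * diagonal a * Vᵀ := by
    simp [Matrix.mul_assoc]
  subst hHV
  refine ⟨V * diagonal (fun i => (d i)⁻¹) * Vᵀ, ⟨?_, ?_, ?_, ?_⟩, symm _, ?_⟩
  · simp only [key, mul_inv_mul_cancel]
  · have h (x : ℝ) : x⁻¹ * x * x⁻¹ = x⁻¹ := by simpa using mul_inv_mul_cancel x⁻¹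
    simp only [key, h]
  · rw [key, symm]
  · rw [key, symm]
  · simp only [key, mul_comm]

theorem exists_isPinv [DecidableEq n] (A : Matrix m n ℝ) : ∃ B, IsPinv A B := by
  obtain ⟨G, hG, hGs, hc⟩ := exists_isPinv_of_isHermitian (Aᵀ * A)
    (by simp [IsHermitian, conjTranspose_eq_transpose_of_trivial])
  refine ⟨G * Aᵀ, ?_, ?_, ?_, ?_⟩
  · have h : A * (G * (Aᵀ * A) - 1) = 0 := by
      apply eq_zero_of_transpose_mul_self_mul
      rw [Matrix.mul_sub, ← Matrix.mul_assoc, hG.mul_mul_self, Matrix.mul_one, sub_self]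
    rw [Matrix.mul_sub, Matrix.mul_one, sub_eq_zero] at h
    simpa only [Matrix.mul_assoc] using h
  · have := congrArg (· * Aᵀ) hG.self_mul_mul
    simpa only [Matrix.mul_assoc] using this
  · simp [hGs, Matrix.mul_assoc]
  · have := hG.transpose_right
    simpa only [Matrix.mul_assoc] using this

theorem isPinv_pinv [DecidableEq m] [DecidableEq n] (A : Matrix m n ℝ) : IsPinv A (pinv A) := by
  have h : ∃ B : Matrix n m ℝ,
      A * B * A = A ∧ B * A * B = B ∧ (A * B)ᵀ = A * B ∧ (B * A)ᵀ = B * A :=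
    let ⟨B, hB⟩ := exists_isPinv A
    ⟨B, hB.mul_mul_self, hB.self_mul_mul, hB.transpose_left, hB.transpose_right⟩
  rw [pinv, dif_pos h]
  obtain ⟨h1, h2, h3, h4⟩ := h.choose_spec
  exact ⟨h1, h2, h3, h4⟩

variable [Fintype p]

theorem frobSq_eq_trace (A : Matrix m n ℝ) : frobSq A = (A * Aᵀ).trace := by
  simp [frobSq, trace, Matrix.mul_apply, sq]

theorem frobSq_transpose (A : Matrix m n ℝ) : frobSq Aᵀ = frobSq A := by
  simp only [frobSq, transpose_apply]
  exact Finset.sum_comm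

theorem frobSq_nonneg (A : Matrix m n ℝ) : 0 ≤ frobSq A := by
  unfold frobSq; positivity

theorem frobSq_eq_zero {A : Matrix m n ℝ} (h : frobSq A = 0) : A = 0 := by
  ext i j
  have h1 := (Finset.sum_eq_zero_iff_of_nonneg (fun i _ => by positivity)).1 h i (Finset.mem_univ _)
  have h2 := (Finset.sum_eq_zero_iff_of_nonneg (fun j _ => by positivity)).1 h1 j
    (Finset.mem_univ _)
  simpa using h2

theorem frobSq_mul_of_transpose_mul_self [DecidableEq n] (U : Matrix m n ℝ) (hU : Uᵀ * U = 1)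
    (X : Matrix n p ℝ) : frobSq (U * X) = frobSq X := by
  rw [← frobSq_transpose (U * X), ← frobSq_transpose X, frobSq_eq_trace, frobSq_eq_trace]
  congr 1
  simp only [transpose_mul, transpose_transpose]
  calc Xᵀ * Uᵀ * (U * X) = Xᵀ * (Uᵀ * U) * X := by simp only [Matrix.mul_assoc]
    _ = _ := by rw [hU, Matrix.mul_one]

theorem frobSq_of_proj (P : Matrix n n ℝ) (hs : Pᵀ = P) (hi : P * P = P) :
    frobSq P = P.trace := by
  rw [frobSq_eq_trace, hs, hi]

theorem frobSq_eq_add [DecidableEq n] (X : Matrix m n ℝ) (E : Matrix l n ℝ) (F : Matrix p n ℝ)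
    (h : Eᵀ * E + Fᵀ * F = 1) : frobSq X = frobSq (X * Eᵀ) + frobSq (X * Fᵀ) := by
  simp only [frobSq_eq_trace, ← trace_add]
  congr 1
  calc X * Xᵀ = X * (Eᵀ * E + Fᵀ * F) * Xᵀ := by rw [h, Matrix.mul_one]
    _ = _ := by simp [Matrix.mul_add, Matrix.add_mul, Matrix.mul_assoc]

theorem frobSq_mul_proj_le [DecidableEq n] (X : Matrix m n ℝ) (P : Matrix n n ℝ) (hs : Pᵀ = P)
    (hi : P * P = P) : frobSq (X * P) ≤ frobSq X := by
  have h := frobSq_eq_add X P (1 - P) (by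
    rw [transpose_sub, hs, transpose_one, hi]
    simp [Matrix.mul_sub, Matrix.sub_mul, hi])
  rw [hs] at h
  linarith [frobSq_nonneg (X * (1 - P)ᵀ)]

theorem frobSq_proj_mul_le [DecidableEq m] (X : Matrix m n ℝ) (P : Matrix m m ℝ) (hs : Pᵀ = P)
    (hi : P * P = P) : frobSq (P * X) ≤ frobSq X := by
  have := frobSq_mul_proj_le Xᵀ P hs hi
  rwa [← frobSq_transpose X, ← frobSq_transpose (P * X), transpose_mul, hs]

theorem IsPinv.idem_right {A : Matrix m n ℝ} {B : Matrix n m ℝ} (h : IsPinv A B) :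
    B * A * (B * A) = B * A := by
  rw [← Matrix.mul_assoc, h.self_mul_mul]

theorem IsPinv.idem_left {A : Matrix m n ℝ} {B : Matrix n m ℝ} (h : IsPinv A B) :
    A * B * (A * B) = A * B := by
  rw [← Matrix.mul_assoc, h.mul_mul_self]

theorem trace_of_idem [DecidableEq n] (P : Matrix n n ℝ) (hi : P * P = P) :
    P.trace = P.rank := by
  have hid : IsIdempotentElem (toLin' P) := by
    rw [IsIdempotentElem, Module.End.mul_eq_comp, ← toLin'_mul, hi]
  have := (LinearMap.IsIdempotentElem.isProj_range _ hid).trace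
  rw [trace_toLin'_eq] at this
  rw [this]
  rfl

theorem IsPinv.trace_eq_rank {A : Matrix m n ℝ} {B : Matrix n m ℝ} [DecidableEq n]
    (h : IsPinv A B) : (B * A).trace = A.rank := by
  rw [trace_of_idem _ h.idem_right]
  congr 1
  refine le_antisymm (rank_mul_le_right _ _) ?_
  conv_lhs => rw [← h.mul_mul_self, Matrix.mul_assoc]
  exact rank_mul_le_right _ _

/-- The pseudoinverse has least Frobenius norm among the `X` with `X * A = A† * A`. -/
theorem IsPinv.frobSq_le {A : Matrix m n ℝ} {B X : Matrix n m ℝ} [DecidableEq m]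
    (h : IsPinv A B) (hX : X * A = B * A) : frobSq B ≤ frobSq X := by
  have : B = X * (A * B) := by rw [← Matrix.mul_assoc, hX, h.self_mul_mul]
  rw [this]
  exact frobSq_mul_proj_le X _ h.transpose_left h.idem_left

variable {A : Matrix m n ℝ} {A' : Matrix n m ℝ} {E : Matrix l m ℝ} {B' : Matrix n l ℝ}

theorem IsPinv.proj_mul_proj (hA : IsPinv A A') : (B' * (E * A)) * (A' * A) = B' * (E * A) := by
  have : A * (A' * A) = A := by rw [← Matrix.mul_assoc, hA.mul_mul_self]
  simp only [Matrix.mul_assoc, this]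

theorem IsPinv.proj_mul_proj' (hA : IsPinv A A') (hB : IsPinv (E * A) B') :
    (A' * A) * (B' * (E * A)) = B' * (E * A) := by
  have := congrArg transpose (hA.proj_mul_proj (E := E) (B' := B'))
  rwa [transpose_mul, hA.transpose_right, hB.transpose_right] at this

theorem proj_eq_of_mul_proj_eq (hA : IsPinv A A') (hB : IsPinv (E * A) B')
    (h : A * (B' * (E * A)) = A) : B' * (E * A) = A' * A := by
  rw [← hA.proj_mul_proj' hB, Matrix.mul_assoc, h]

theorem frobSq_le_of_mul_proj_eq [DecidableEq l] [DecidableEq m] (hA : IsPinv A A') (hB : IsPinv (E * A) B')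
    (hE : E * Eᵀ = 1) (h : A * (B' * (E * A)) = A) : frobSq A' ≤ frobSq B' := by
  have h1 : frobSq (B' * E) = frobSq B' := by
    rw [frobSq_eq_trace, frobSq_eq_trace, transpose_mul]
    congr 1
    calc B' * E * (Eᵀ * B'ᵀ) = B' * (E * Eᵀ) * B'ᵀ := by simp only [Matrix.mul_assoc]
      _ = _ := by rw [hE, Matrix.mul_one]
  rw [← h1]
  apply hA.frobSq_le
  rw [Matrix.mul_assoc, proj_eq_of_mul_proj_eq hA hB h]

theorem trace_ne_of_mul_proj_ne (hA : IsPinv A A') (hB : IsPinv (E * A) B')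
    (h : A * (B' * (E * A)) ≠ A) : (B' * (E * A)).trace ≠ (A' * A).trace := by
  intro ht
  have hP : (A' * A - B' * (E * A))ᵀ = A' * A - B' * (E * A) := by
    rw [transpose_sub, hA.transpose_right, hB.transpose_right]
  have hi : (A' * A - B' * (E * A)) * (A' * A - B' * (E * A)) = A' * A - B' * (E * A) := by
    rw [Matrix.mul_sub, Matrix.sub_mul, Matrix.sub_mul, hA.idem_right, hB.idem_right,
      hA.proj_mul_proj, hA.proj_mul_proj' hB, sub_self, sub_zero]
  have h0 := frobSq_eq_zero ((frobSq_of_proj _ hP hi).trans (by rw [trace_sub, ht, sub_self]))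
  rw [sub_eq_zero] at h0
  exact h (by rw [← h0, ← Matrix.mul_assoc, hA.mul_mul_self])

/-- If the row `eᵀ * A` is not in the row space of `E * A`, where `E` keeps the other rows,
then `e` lies in the column space of `A`. -/
theorem mul_pinv_mul_eq_of_mul_proj_ne [DecidableEq m] [DecidableEq n] {e : Matrix m Unit ℝ} (hA : IsPinv A A')
    (hB : IsPinv (E * A) B') (hEe : Eᵀ * E + e * eᵀ = 1) (h : A * (B' * (E * A)) ≠ A) :
    A * (A' * e) = e := by
  set P := B' * (E * A) with hPdef
  set y : Matrix n Unit ℝ := (1 - P) * (Aᵀ * e) with hy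
  have hPs : Pᵀ = P := hB.transpose_right
  have hBP : E * A * (1 - P) = 0 := by
    rw [Matrix.mul_sub, Matrix.mul_one, hPdef, ← Matrix.mul_assoc, hB.mul_mul_self, sub_self]
  have hyT : yᵀ = eᵀ * A * (1 - P) := by
    rw [hy, transpose_mul, transpose_mul, transpose_sub, transpose_transpose, transpose_one, hPs]
  have hidem : (1 - P) * (1 - P) = 1 - P := by
    have : P * P = P := hB.idem_right
    simp [Matrix.mul_sub, Matrix.sub_mul, this]
  have hPy : (1 - P) * y = y := by rw [hy, ← Matrix.mul_assoc, hidem]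
  have hy0 : y ≠ 0 := by
    intro hy0
    apply h
    have : A * (1 - P) = 0 := by
      calc A * (1 - P) = (Eᵀ * E + e * eᵀ) * (A * (1 - P)) := by rw [hEe, Matrix.one_mul]
        _ = Eᵀ * (E * A * (1 - P)) + e * (eᵀ * A * (1 - P)) := by
          simp only [Matrix.add_mul, Matrix.mul_assoc]
        _ = 0 := by rw [hBP, ← hyT, hy0]; simp
    rw [Matrix.mul_sub, Matrix.mul_one, sub_eq_zero] at this
    exact this.symm
  have hAy : A * y = e * (yᵀ * y) := by
    calc A * y = (Eᵀ * E + e * eᵀ) * (A * ((1 - P) * y)) := by rw [hEe, Matrix.one_mul, hPy]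
      _ = Eᵀ * (E * A * (1 - P)) * y + e * (eᵀ * A * (1 - P) * y) := by
          simp only [Matrix.add_mul, Matrix.mul_assoc]
      _ = _ := by rw [hBP, ← hyT]; simp
  have hc : yᵀ * y = frobSq y • (1 : Matrix Unit Unit ℝ) := by
    ext i j
    simp [Matrix.mul_apply, frobSq, sq]
  have hc0 : frobSq y ≠ 0 := fun h0 => hy0 (frobSq_eq_zero h0)
  have hAe : A * y = frobSq y • e := by rw [hAy, hc]; simp
  have he : frobSq y • (A * (A' * e)) = frobSq y • e := by
    rw [← Matrix.mul_smul, ← Matrix.mul_smul, ← hAe, ← Matrix.mul_assoc, ← Matrix.mul_assoc,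
      hA.mul_mul_self]
  exact smul_right_injective _ hc0 he

theorem frobSq_lt_of_mul_proj_ne [DecidableEq l] [DecidableEq m] [DecidableEq n] {e : Matrix m Unit ℝ} (hA : IsPinv A A')
    (hB : IsPinv (E * A) B') (hEe : Eᵀ * E + e * eᵀ = 1) (hE0 : E * e = 0) (he : e ≠ 0)
    (h : A * (B' * (E * A)) ≠ A) : frobSq B' < frobSq A' := by
  have hw := mul_pinv_mul_eq_of_mul_proj_ne hA hB hEe h
  have hsum := frobSq_eq_add A' E eᵀ (by rwa [transpose_transpose])
  rw [transpose_transpose] at hsum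
  have hpos : 0 < frobSq (A' * e) := by
    refine (frobSq_nonneg _).lt_of_ne fun h0 => he ?_
    rw [← hw, frobSq_eq_zero h0.symm, Matrix.mul_zero]
  have hX : B' * (E * A) * (A' * Eᵀ) * (E * A) = B' * (E * A) := by
    have hEE : Eᵀ * E = 1 - e * eᵀ := eq_sub_of_add_eq hEe
    calc B' * (E * A) * (A' * Eᵀ) * (E * A)
        = B' * (E * A) * (A' * ((Eᵀ * E) * A)) := by simp only [Matrix.mul_assoc]
      _ = B' * (E * A) * (A' * A) - B' * (E * (A * (A' * e))) * (eᵀ * A) := by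
        rw [hEE]
        simp only [Matrix.sub_mul, Matrix.mul_sub, Matrix.one_mul, Matrix.mul_assoc]
      _ = _ := by rw [hw, hE0, hA.proj_mul_proj]; simp
  have h1 := hB.frobSq_le hX
  have h2 := frobSq_proj_mul_le (A' * Eᵀ) _ hB.transpose_right hB.idem_right
  linarith

end General

theorem xi1_eq {N k : ℕ} (U : Matrix (Fin N) (Fin k) ℝ) (hU : Uᵀ * U = 1) (S : Finset (Fin N)) :
    xi1 U S = k - (pinv (samp S * U) * (samp S * U)).trace := by
  have hP := isPinv_pinv (samp S * U)
  have hi := hP.idem_right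
  rw [xi1, lsRec, Matrix.mul_assoc]
  set P := pinv (samp S * U) * (samp S * U)
  rw [show U - U * P = U * (1 - P) by rw [Matrix.mul_sub, Matrix.mul_one],
    frobSq_mul_of_transpose_mul_self U hU, frobSq_of_proj, trace_sub, trace_one, Fintype.card_fin]
  · rw [transpose_sub, transpose_one, hP.transpose_right]
  · simp [Matrix.mul_sub, Matrix.sub_mul, hi]

theorem xi2_eq {N k : ℕ} (U : Matrix (Fin N) (Fin k) ℝ) (hU : Uᵀ * U = 1) (S : Finset (Fin N)) :
    xi2 U S = frobSq (pinv (samp S * U)) :=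
  frobSq_mul_of_transpose_mul_self U hU _

theorem samp_mul_transpose_samp {N : ℕ} (S : Finset (Fin N)) : samp S * (samp S)ᵀ = 1 := by
  ext i j
  simp only [Matrix.mul_apply, transpose_apply, samp, mul_ite, mul_one, mul_zero,
    Matrix.one_apply, Subtype.ext_iff, Finset.sum_ite_eq, Finset.mem_univ, if_true]

theorem transpose_samp_mul_samp {N : ℕ} (S : Finset (Fin N)) :
    (samp S)ᵀ * samp S = diagonal fun i => if i ∈ S then 1 else 0 := by
  ext i j
  simp only [Matrix.mul_apply, transpose_apply, samp, diagonal_apply, mul_ite, mul_one, mul_zero]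
  rw [Finset.sum_coe_sort S (fun x => if x = j then if x = i then (1 : ℝ) else 0 else 0)]
  by_cases hij : i = j
  · subst hij; simp +contextual
  · simp [Ne.symm hij, hij]

theorem samp_mul_diagonal_of_subset {N : ℕ} {S T : Finset (Fin N)} (h : T ⊆ S) :
    samp T * diagonal (fun i => if i ∈ S then (1 : ℝ) else 0) = samp T := by
  ext i j
  rw [mul_diagonal, samp]
  split_ifs with h1 h2 <;> simp_all
  exact h2 (h (h1 ▸ i.2))

/-- `E` deletes the row indexed by `v` and `e` is the unit column vector at `v`. -/
theorem exists_row_deletion {N : ℕ} (S : Finset (Fin N)) (v : Fin N) (hv : v ∈ S) :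
    ∃ (E : Matrix {x // x ∈ S.erase v} {x // x ∈ S} ℝ) (e : Matrix {x // x ∈ S} Unit ℝ),
      E * samp S = samp (S.erase v) ∧ E * Eᵀ = 1 ∧ Eᵀ * E + e * eᵀ = 1 ∧ E * e = 0 ∧ e ≠ 0 := by
  have hsub := samp_mul_diagonal_of_subset (S.erase_subset v)
  rw [← transpose_samp_mul_samp, ← Matrix.mul_assoc] at hsub
  have hδ : (samp (S.erase v))ᵀ * samp (S.erase v) +
      single v () (1 : ℝ) * (single v () (1 : ℝ))ᵀ =
      (samp S)ᵀ * samp S := by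
    rw [transpose_samp_mul_samp, transpose_samp_mul_samp, transpose_single,
      single_mul_single_same, ← diagonal_single, diagonal_add]
    congr 1
    ext i
    by_cases hi : i = v
    · subst hi; simp [hv]
    · simp [hi]
  refine ⟨samp (S.erase v) * (samp S)ᵀ, samp S * single v () (1 : ℝ), hsub, ?_, ?_, ?_, ?_⟩
  · rw [transpose_mul, transpose_transpose, ← Matrix.mul_assoc, hsub, samp_mul_transpose_samp]
  · calc _ = samp S * ((samp (S.erase v))ᵀ * samp (S.erase v) +
          single v () (1 : ℝ) * (single v () (1 : ℝ))ᵀ) * (samp S)ᵀ := by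
          simp only [transpose_mul, transpose_transpose, Matrix.mul_add, Matrix.add_mul,
            Matrix.mul_assoc]
      _ = (samp S * (samp S)ᵀ) * (samp S * (samp S)ᵀ) := by
          rw [hδ]; simp only [Matrix.mul_assoc]
      _ = 1 := by rw [samp_mul_transpose_samp, Matrix.mul_one]
  · rw [← Matrix.mul_assoc, hsub]
    ext i j
    have : (i : Fin N) ≠ v := Finset.ne_of_mem_erase i.2
    simp [Matrix.mul_apply, samp, single_apply, this]
  · intro h
    have := congrFun (congrFun h ⟨v, hv⟩) ()
    simp [Matrix.mul_apply, samp, single_apply] at this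

/-- for `|S| ≥ 2` and `v ∈ S`, `Δ₁(S,v) = 0 ↔ Δ₂(S,v) ≤ 0`;
equivalently, removing `v` leaves `rank(M_S U)` unchanged iff `ξ₂(S∖{v}) ≥ ξ₂(S)`. -/
theorem stmt8 (N k : ℕ) (hN : 0 < N) (hk : 0 < k) (hkN : k ≤ N)
    (U : Matrix (Fin N) (Fin k) ℝ) (hU : Uᵀ * U = 1)
    (S : Finset (Fin N)) (hS : 2 ≤ S.card) (v : Fin N) (hv : v ∈ S) :
    (xi1 U S - xi1 U (S.erase v) = 0 ↔ xi2 U S - xi2 U (S.erase v) ≤ 0) ∧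
    ((samp (S.erase v) * U).rank = (samp S * U).rank ↔ xi2 U S ≤ xi2 U (S.erase v)) := by
  obtain ⟨E, e, hES, hEE, hEe, hE0, he⟩ := exists_row_deletion S v hv
  have hA := isPinv_pinv (samp S * U)
  have hB := isPinv_pinv (samp (S.erase v) * U)
  rw [xi1_eq U hU, xi1_eq U hU, xi2_eq U hU, xi2_eq U hU, ← @Nat.cast_inj ℝ,
    ← hA.trace_eq_rank, ← hB.trace_eq_rank, sub_sub_sub_cancel_left, sub_eq_zero, sub_nonpos,
    and_self]
  generalize pinv (samp (S.erase v) * U) = B' at hB ⊢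
  rw [← hES, Matrix.mul_assoc] at hB ⊢
  by_cases h : samp S * U * (B' * (E * (samp S * U))) = samp S * U
  · exact iff_of_true (congrArg trace (proj_eq_of_mul_proj_eq hA hB h))
      (frobSq_le_of_mul_proj_eq hA hB hEE h)
  · exact iff_of_false (trace_ne_of_mul_proj_ne hA hB h)
      (frobSq_lt_of_mul_proj_ne hA hB hEe hE0 he h).not_ge
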